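/- The second derivative of the piecewise density P is continuous at l = √2·a: the derivative function P′ is differentiable at l = √2·a; equivalently, the limit as l → (√2·a)⁻ of the second derivative of P₂ equals the limit as l → (√2·a)⁺ of the second derivative of P₃. -/

import Mathlib

open MeasureTheory Real Set Filter Topology

/-- The density of separations on the range `a ≤ l ≤ √2·a`. -/
noncomputable def P₂ (a l : ℝ) : ℝ :=
  l / a ^ 6 *
    (2 * l ^ 4 + 6 * a ^ 2 * l ^ 2 - a ^ 4 - 2 * π * a ^ 3 * (4 * l - 3 * a)
      - 8 * a * (2 * l ^ 2 + a ^ 2) * Real.sqrt (l ^ 2 - a ^ 2)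
      + 24 * a ^ 2 * l ^ 2 * Real.arccos (a / l))

/-- The density of separations on the range `√2·a ≤ l ≤ √3·a`. -/
noncomputable def P₃ (a l : ℝ) : ℝ :=
  l / a ^ 6 *
    (8 * a * (l ^ 2 + a ^ 2) * Real.sqrt (l ^ 2 - 2 * a ^ 2)
      - (l ^ 2 + a ^ 2) * (l ^ 2 + 5 * a ^ 2)
      + 2 * π * a ^ 2 * (3 * l ^ 2 - 4 * a * l + 3 * a ^ 2)
      + 24 * a ^ 3 * l * Real.arccos (a ^ 2 / (l ^ 2 - a ^ 2))
      - 24 * a ^ 2 * (l ^ 2 + a ^ 2) * Real.arccos (a / Real.sqrt (l ^ 2 - a ^ 2)))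

/-- The piecewise density: `P₂` on `[a, √2·a]` and `P₃` on `[√2·a, √3·a]`. -/
noncomputable def P (a l : ℝ) : ℝ :=
  if l ≤ Real.sqrt 2 * a then P₂ a l else P₃ a l

noncomputable def auxR (a l : ℝ) : ℝ :=
  2 * l ^ 4 + 6 * a ^ 2 * l ^ 2 - a ^ 4 - 2 * π * a ^ 3 * (4 * l - 3 * a)
      - 8 * a * (2 * l ^ 2 + a ^ 2) * Real.sqrt (l ^ 2 - a ^ 2)
      + 24 * a ^ 2 * l ^ 2 * Real.arccos (a / l)

noncomputable def auxR1 (a l : ℝ) : ℝ :=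
  8 * l ^ 3 + 12 * a ^ 2 * l - 8 * π * a ^ 3 - 48 * a * l * Real.sqrt (l ^ 2 - a ^ 2)
    + 48 * a ^ 2 * l * Real.arccos (a / l)

noncomputable def auxR2 (a l : ℝ) : ℝ :=
  24 * l ^ 2 + 12 * a ^ 2 - 96 * a * Real.sqrt (l ^ 2 - a ^ 2) + 48 * a ^ 2 * Real.arccos (a / l)

noncomputable def auxQ (a l : ℝ) : ℝ :=
  8 * a * (l ^ 2 + a ^ 2) * Real.sqrt (l ^ 2 - 2 * a ^ 2)
      - (l ^ 2 + a ^ 2) * (l ^ 2 + 5 * a ^ 2)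
      + 2 * π * a ^ 2 * (3 * l ^ 2 - 4 * a * l + 3 * a ^ 2)
      + 24 * a ^ 3 * l * Real.arccos (a ^ 2 / (l ^ 2 - a ^ 2))
      - 24 * a ^ 2 * (l ^ 2 + a ^ 2) * Real.arccos (a / Real.sqrt (l ^ 2 - a ^ 2))

noncomputable def auxQ1 (a l : ℝ) : ℝ :=
  24 * a * l * Real.sqrt (l ^ 2 - 2 * a ^ 2) - 4 * l ^ 3 - 12 * a ^ 2 * l
    + 2 * π * a ^ 2 * (6 * l - 4 * a)
    + 24 * a ^ 3 * Real.arccos (a ^ 2 / (l ^ 2 - a ^ 2))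
    - 48 * a ^ 2 * l * Real.arccos (a / Real.sqrt (l ^ 2 - a ^ 2))

noncomputable def auxQ2 (a l : ℝ) : ℝ :=
  48 * a * Real.sqrt (l ^ 2 - 2 * a ^ 2) - 12 * l ^ 2 - 12 * a ^ 2 + 12 * π * a ^ 2
    - 48 * a ^ 2 * Real.arccos (a / Real.sqrt (l ^ 2 - a ^ 2))

lemma aux_arccos {f : ℝ → ℝ} {f' l w : ℝ} (hf : HasDerivAt f f' l) (hw : 0 < w)
    (h : 1 - f l ^ 2 = w ^ 2) : HasDerivAt (fun x => Real.arccos (f x)) (-(f' / w)) l := by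
  have h1 : f l ≠ -1 := by
    intro h2; rw [h2] at h; nlinarith
  have h2 : f l ≠ 1 := by
    intro h2; rw [h2] at h; nlinarith
  have := (Real.hasDerivAt_arccos h1 h2).comp l hf
  rw [h, Real.sqrt_sq hw.le] at this
  refine this.congr_deriv ?_
  field_simp

lemma aux_sqrt {l k : ℝ} (h : 0 < l ^ 2 - k) :
    HasDerivAt (fun x => Real.sqrt (x ^ 2 - k)) (l / Real.sqrt (l ^ 2 - k)) l := by
  have h1 : HasDerivAt (fun x : ℝ => x ^ 2 - k) (2 * l) l := by
    simpa using (hasDerivAt_pow 2 l).sub_const k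
  refine (h1.sqrt h.ne').congr_deriv ?_
  have := Real.sqrt_pos.2 h
  field_simp

lemma aux_C {a l : ℝ} (ha : 0 < a) (hl : a < l) :
    HasDerivAt (fun x => Real.arccos (a / x)) (a / (l * Real.sqrt (l ^ 2 - a ^ 2))) l := by
  have hl0 : 0 < l := ha.trans hl
  have hp : 0 < l ^ 2 - a ^ 2 := by nlinarith
  have ht := Real.sqrt_pos.2 hp
  have hs := Real.sq_sqrt hp.le
  set t := Real.sqrt (l ^ 2 - a ^ 2)
  have h1 : HasDerivAt (fun x : ℝ => a / x) (-a / l ^ 2) l := by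
    simpa using (hasDerivAt_const l a).fun_div (hasDerivAt_id l) hl0.ne'
  refine (aux_arccos h1 (w := t / l) (by positivity) ?_).congr_deriv ?_
  · rw [div_pow, div_pow, hs]; field_simp
  · field_simp

lemma aux_A {a l : ℝ} (ha : 0 < a) (hl0 : 0 < l) (hl : 0 < l ^ 2 - 2 * a ^ 2) :
    HasDerivAt (fun x => Real.arccos (a ^ 2 / (x ^ 2 - a ^ 2)))
      (2 * a ^ 2 / (Real.sqrt (l ^ 2 - 2 * a ^ 2) * (l ^ 2 - a ^ 2))) l := by
  have ht := Real.sqrt_pos.2 hl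
  have hs := Real.sq_sqrt hl.le
  set t := Real.sqrt (l ^ 2 - 2 * a ^ 2)
  have hp : 0 < l ^ 2 - a ^ 2 := by nlinarith
  have h0 : HasDerivAt (fun x : ℝ => x ^ 2 - a ^ 2) (2 * l) l := by
    simpa using (hasDerivAt_pow 2 l).sub_const (a ^ 2)
  have h1 : HasDerivAt (fun x : ℝ => a ^ 2 / (x ^ 2 - a ^ 2))
      (-(a ^ 2 * (2 * l)) / (l ^ 2 - a ^ 2) ^ 2) l := by
    simpa using (hasDerivAt_const l (a ^ 2)).fun_div h0 hp.ne'
  refine (aux_arccos h1 (w := l * t / (l ^ 2 - a ^ 2)) (by positivity) ?_).congr_deriv ?_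
  · rw [div_pow, div_pow, mul_pow, hs]; field_simp; ring
  · field_simp

lemma aux_B {a l : ℝ} (ha : 0 < a) (hl : 0 < l ^ 2 - 2 * a ^ 2) :
    HasDerivAt (fun x => Real.arccos (a / Real.sqrt (x ^ 2 - a ^ 2)))
      (a * l / (Real.sqrt (l ^ 2 - 2 * a ^ 2) * (l ^ 2 - a ^ 2))) l := by
  have hp : 0 < l ^ 2 - a ^ 2 := by nlinarith
  have h0 := aux_sqrt hp
  have hr := Real.sqrt_pos.2 hp
  have hrs := Real.sq_sqrt hp.le
  have ht := Real.sqrt_pos.2 hl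
  have hs := Real.sq_sqrt hl.le
  have h1 : HasDerivAt (fun x : ℝ => a / Real.sqrt (x ^ 2 - a ^ 2))
      (-(a * (l / Real.sqrt (l ^ 2 - a ^ 2))) / (Real.sqrt (l ^ 2 - a ^ 2)) ^ 2) l := by
    simpa using (hasDerivAt_const l a).fun_div h0 hr.ne'
  set t := Real.sqrt (l ^ 2 - 2 * a ^ 2)
  set r := Real.sqrt (l ^ 2 - a ^ 2)
  refine (aux_arccos h1 (w := t / r) (by positivity) ?_).congr_deriv ?_
  · rw [div_pow, div_pow, hs, hrs]; field_simp; ring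
  · rw [← hrs]; field_simp

lemma aux_pow (l : ℝ) (n : ℕ) : HasDerivAt (fun x : ℝ => x ^ n) (n * l ^ (n - 1)) l :=
  hasDerivAt_pow n l

lemma aux_R {a l : ℝ} (ha : 0 < a) (hl : a < l) : HasDerivAt (auxR a) (auxR1 a l) l := by
  have hl0 : 0 < l := ha.trans hl
  have hp : 0 < l ^ 2 - a ^ 2 := by nlinarith
  have hC := aux_C ha hl
  have hS := aux_sqrt hp
  have hi := hasDerivAt_id' l
  have hsq := hasDerivAt_pow 2 l
  have H := (((((hasDerivAt_pow 4 l).const_mul 2).fun_add (hsq.const_mul (6 * a ^ 2))).sub_const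
    (a ^ 4)).fun_sub (((hi.const_mul 4).sub_const (3 * a)).const_mul (2 * π * a ^ 3))).fun_sub
    ((((hsq.const_mul 2).add_const (a ^ 2)).const_mul (8 * a)).fun_mul hS) |>.fun_add
    ((hsq.const_mul (24 * a ^ 2)).fun_mul hC)
  unfold auxR auxR1
  refine H.congr_deriv ?_
  have ht := Real.sqrt_pos.2 hp
  have hs := Real.sq_sqrt hp.le
  set t := Real.sqrt (l ^ 2 - a ^ 2)
  have e : a ^ 2 = l ^ 2 - t ^ 2 := by linarith
  field_simp
  push_cast
  ring_nf
  grind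

lemma aux_R1 {a l : ℝ} (ha : 0 < a) (hl : a < l) : HasDerivAt (auxR1 a) (auxR2 a l) l := by
  have hl0 : 0 < l := ha.trans hl
  have hp : 0 < l ^ 2 - a ^ 2 := by nlinarith
  have hC := aux_C ha hl
  have hS := aux_sqrt hp
  have hi := hasDerivAt_id' l
  have H := (((((hasDerivAt_pow 3 l).const_mul 8).fun_add (hi.const_mul (12 * a ^ 2))).sub_const
    (8 * π * a ^ 3)).fun_sub ((hi.const_mul (48 * a)).fun_mul hS)).fun_add
    ((hi.const_mul (48 * a ^ 2)).fun_mul hC)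
  unfold auxR1 auxR2
  refine H.congr_deriv ?_
  have ht := Real.sqrt_pos.2 hp
  have hs := Real.sq_sqrt hp.le
  set t := Real.sqrt (l ^ 2 - a ^ 2)
  field_simp
  push_cast
  ring_nf
  grind

lemma aux_Q {a l : ℝ} (ha : 0 < a) (hl0 : 0 < l) (hl : 0 < l ^ 2 - 2 * a ^ 2) :
    HasDerivAt (auxQ a) (auxQ1 a l) l := by
  have hp : 0 < l ^ 2 - a ^ 2 := by nlinarith
  have hA := aux_A ha hl0 hl
  have hB := aux_B ha hl
  have hS := aux_sqrt hl
  have hi := hasDerivAt_id' l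
  have hsq := hasDerivAt_pow 2 l
  have H := ((((((hsq.add_const (a ^ 2)).const_mul (8 * a)).fun_mul hS).fun_sub
    ((hsq.add_const (a ^ 2)).fun_mul (hsq.add_const (5 * a ^ 2)))).fun_add
    ((((hsq.const_mul 3).fun_sub (hi.const_mul (4 * a))).add_const (3 * a ^ 2)).const_mul
      (2 * π * a ^ 2))).fun_add ((hi.const_mul (24 * a ^ 3)).fun_mul hA)).fun_sub
    (((hsq.add_const (a ^ 2)).const_mul (24 * a ^ 2)).fun_mul hB)
  unfold auxQ auxQ1
  refine H.congr_deriv ?_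
  have ht := Real.sqrt_pos.2 hl
  have hs := Real.sq_sqrt hl.le
  set t := Real.sqrt (l ^ 2 - 2 * a ^ 2)
  generalize Real.arccos (a ^ 2 / (l ^ 2 - a ^ 2)) = A
  generalize Real.arccos (a / Real.sqrt (l ^ 2 - a ^ 2)) = B
  have key : 8 * a * (l ^ 2 + a ^ 2) * (l / t) + 24 * a ^ 3 * l * (2 * a ^ 2 / (t * (l ^ 2 - a ^ 2)))
     - 24 * a ^ 2 * (l ^ 2 + a ^ 2) * (a * l / (t * (l ^ 2 - a ^ 2))) = 8 * a * l * t := by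
    field_simp
    rw [hs]; ring
  push_cast
  linear_combination key

lemma aux_Q1 {a l : ℝ} (ha : 0 < a) (hl0 : 0 < l) (hl : 0 < l ^ 2 - 2 * a ^ 2) :
    HasDerivAt (auxQ1 a) (auxQ2 a l) l := by
  have hp : 0 < l ^ 2 - a ^ 2 := by nlinarith
  have hA := aux_A ha hl0 hl
  have hB := aux_B ha hl
  have hS := aux_sqrt hl
  have hi := hasDerivAt_id' l
  have H := ((((((hi.const_mul (24 * a)).fun_mul hS).fun_sub
    ((hasDerivAt_pow 3 l).const_mul 4)).fun_sub (hi.const_mul (12 * a ^ 2))).fun_add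
    (((hi.const_mul 6).sub_const (4 * a)).const_mul (2 * π * a ^ 2))).fun_add
    (hA.const_mul (24 * a ^ 3))).fun_sub ((hi.const_mul (48 * a ^ 2)).fun_mul hB)
  unfold auxQ1 auxQ2
  refine H.congr_deriv ?_
  have ht := Real.sqrt_pos.2 hl
  have hs := Real.sq_sqrt hl.le
  set t := Real.sqrt (l ^ 2 - 2 * a ^ 2)
  generalize Real.arccos (a / Real.sqrt (l ^ 2 - a ^ 2)) = B
  have key : 24 * a * l * (l / t) + 24 * a ^ 3 * (2 * a ^ 2 / (t * (l ^ 2 - a ^ 2)))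
     - 48 * a ^ 2 * l * (a * l / (t * (l ^ 2 - a ^ 2))) = 24 * a * t := by
    field_simp
    rw [hs]; ring
  push_cast
  linear_combination key

lemma aux_lift {f f1 : ℝ → ℝ} {k l : ℝ} (h : HasDerivAt f (f1 l) l) :
    HasDerivAt (fun x => x / k * f x) ((f l + l * f1 l) / k) l := by
  have := ((hasDerivAt_id' l).div_const k).fun_mul h
  refine this.congr_deriv ?_
  ring

lemma aux_lift1 {f f1 f2 : ℝ → ℝ} {k l : ℝ} (h : HasDerivAt f (f1 l) l)
    (h1 : HasDerivAt f1 (f2 l) l) :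
    HasDerivAt (fun x => (f x + x * f1 x) / k) ((2 * f1 l + l * f2 l) / k) l := by
  have := (h.fun_add ((hasDerivAt_id' l).fun_mul h1)).div_const k
  refine this.congr_deriv ?_
  ring

lemma aux_glue {f g f1 g1 : ℝ → ℝ} {b c : ℝ} (hb : b < c)
    (hf : ∀ l, b < l → HasDerivAt f (f1 l) l) (hg : ∀ l, c < l → HasDerivAt g (g1 l) l)
    (hgc : ContinuousAt g c) (hg1c : ContinuousAt g1 c)
    (h0 : f c = g c) (h1 : f1 c = g1 c) {F : ℝ → ℝ} (hF : ∀ l, b < l → F l = if l ≤ c then f l else g l) :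
    ∀ l, b < l → HasDerivAt F (if l ≤ c then f1 l else g1 l) l := by
  intro l hl
  rcases lt_trichotomy l c with h | h | h
  · rw [if_pos h.le]
    refine (hf l hl).congr_of_eventuallyEq ?_
    filter_upwards [Ioo_mem_nhds hl h] with x hx
    rw [hF x hx.1, if_pos hx.2.le]
  · subst h
    rw [if_pos le_rfl]
    have hL : HasDerivWithinAt F (f1 l) (Iic l) l := by
      refine (hf l hl).hasDerivWithinAt.congr_of_eventuallyEq ?_ (by rw [hF l hl, if_pos le_rfl])
      filter_upwards [mem_nhdsWithin_of_mem_nhds (Ioi_mem_nhds hl), self_mem_nhdsWithin] with x hx hx2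
      rw [hF x hx, if_pos (mem_Iic.1 hx2)]
    have hR0 : HasDerivWithinAt g (g1 l) (Ici l) l := by
      refine hasDerivWithinAt_Ici_of_tendsto_deriv (s := Ioi l)
        (fun x hx => (hg x hx).differentiableAt.differentiableWithinAt) hgc.continuousWithinAt
        self_mem_nhdsWithin ?_
      refine (hg1c.tendsto.mono_left nhdsWithin_le_nhds).congr' ?_
      filter_upwards [self_mem_nhdsWithin] with x hx
      exact (hg x hx).deriv.symm
    have hR : HasDerivWithinAt F (f1 l) (Ici l) l := by
      rw [h1]
      refine hR0.congr (fun x hx => ?_) (by rw [hF l hl, if_pos le_rfl, h0])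
      rw [hF x (hl.trans_le hx)]
      split_ifs with h
      · rw [le_antisymm h hx, h0]
      · rfl
    have := hL.union hR
    rwa [Iic_union_Ici, hasDerivWithinAt_univ] at this
  · rw [if_neg h.not_ge]
    refine (hg l h).congr_of_eventuallyEq ?_
    filter_upwards [Ioi_mem_nhds h] with x hx
    rw [hF x (hb.trans hx), if_neg (not_le.2 hx)]

theorem second_deriv_continuous_at_sqrt_two_a (a : ℝ) (ha : 0 < a) :
    DifferentiableAt ℝ (deriv (P a)) (Real.sqrt 2 * a) ∧
    ∃ L : ℝ,
      Tendsto (fun l => deriv (deriv (P₂ a)) l) (𝓝[<] (Real.sqrt 2 * a)) (𝓝 L) ∧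
      Tendsto (fun l => deriv (deriv (P₃ a)) l) (𝓝[>] (Real.sqrt 2 * a)) (𝓝 L) := by
  have hc2 : (Real.sqrt 2 * a) ^ 2 = 2 * a ^ 2 := by
    rw [mul_pow, Real.sq_sqrt (by norm_num)]
  have hc0 : 0 < Real.sqrt 2 * a := by positivity
  have hquart : Real.arccos (a / (Real.sqrt 2 * a)) = π / 4 := by
    have : a / (Real.sqrt 2 * a) = Real.cos (π / 4) := by
      rw [Real.cos_pi_div_four]
      have := Real.sq_sqrt (show (0:ℝ) ≤ 2 by norm_num)
      field_simp
      linarith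
    rw [this, Real.arccos_cos] <;> linarith [Real.pi_pos]
  have hP : P a = fun l => if l ≤ Real.sqrt 2 * a then P₂ a l else P₃ a l := rfl
  rw [hP]
  clear hP
  set c := Real.sqrt 2 * a with hcdef
  have hac : a < c := by nlinarith
  have hs1 : Real.sqrt (c ^ 2 - a ^ 2) = a := by
    rw [hc2, show 2 * a ^ 2 - a ^ 2 = a ^ 2 by ring, Real.sqrt_sq ha.le]
  have hs2 : Real.sqrt (c ^ 2 - 2 * a ^ 2) = 0 := by rw [hc2]; simp
  have hA : Real.arccos (a ^ 2 / (c ^ 2 - a ^ 2)) = 0 := by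
    rw [hc2, show 2 * a ^ 2 - a ^ 2 = a ^ 2 by ring, div_self (by positivity), Real.arccos_one]
  have hB : Real.arccos (a / Real.sqrt (c ^ 2 - a ^ 2)) = 0 := by
    rw [hs1, div_self ha.ne', Real.arccos_one]
  have hne1 : c ^ 2 - a ^ 2 ≠ 0 := by rw [hc2]; nlinarith
  have hne2 : Real.sqrt (c ^ 2 - a ^ 2) ≠ 0 := by rw [hs1]; exact ha.ne'
  have cR2 : ContinuousAt (auxR2 a) c := by
    unfold auxR2
    have : ContinuousAt (fun l => Real.arccos (a / l)) c :=
      Real.continuous_arccos.continuousAt.comp (continuousAt_const.div continuousAt_id hc0.ne')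
    fun_prop
  have cA : ContinuousAt (fun l : ℝ => Real.arccos (a ^ 2 / (l ^ 2 - a ^ 2))) c :=
    Real.continuous_arccos.continuousAt.comp
      (continuousAt_const.div (by fun_prop) hne1)
  have cB : ContinuousAt (fun l : ℝ => Real.arccos (a / Real.sqrt (l ^ 2 - a ^ 2))) c :=
    Real.continuous_arccos.continuousAt.comp
      (continuousAt_const.div (by fun_prop) hne2)
  have cQ : ContinuousAt (auxQ a) c := by unfold auxQ; fun_prop
  have cQ1 : ContinuousAt (auxQ1 a) c := by unfold auxQ1; fun_prop
  have cQ2 : ContinuousAt (auxQ2 a) c := by unfold auxQ2; fun_prop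
  have hc4 : c ^ 4 = 4 * a ^ 4 := by rw [show c ^ 4 = (c ^ 2) ^ 2 by ring, hc2]; ring
  have hc3 : c ^ 3 = 2 * a ^ 2 * c := by rw [show c ^ 3 = c ^ 2 * c by ring, hc2]
  have e0 : auxR a c = auxQ a c := by
    unfold auxR auxQ
    rw [hA, hB, hs2, hs1, hquart, hc2, hc4]; ring
  have e1 : auxR1 a c = auxQ1 a c := by
    unfold auxR1 auxQ1
    rw [hA, hB, hs2, hs1, hquart, hc3]; ring
  have e2 : auxR2 a c = auxQ2 a c := by
    unfold auxR2 auxQ2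
    rw [hB, hs2, hs1, hquart, hc2]; ring
  have hQpos : ∀ l, c < l → 0 < l ∧ 0 < l ^ 2 - 2 * a ^ 2 := fun l hl =>
    ⟨hc0.trans hl, by nlinarith⟩
  have dP2 : ∀ l, a < l → HasDerivAt (P₂ a) ((auxR a l + l * auxR1 a l) / a ^ 6) l :=
    fun l hl => aux_lift (aux_R ha hl)
  have dP3 : ∀ l, c < l → HasDerivAt (P₃ a) ((auxQ a l + l * auxQ1 a l) / a ^ 6) l :=
    fun l hl => aux_lift (aux_Q ha (hQpos l hl).1 (hQpos l hl).2)
  have ddP2 : ∀ l, a < l → HasDerivAt (fun l => (auxR a l + l * auxR1 a l) / a ^ 6)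
      ((2 * auxR1 a l + l * auxR2 a l) / a ^ 6) l :=
    fun l hl => aux_lift1 (aux_R ha hl) (aux_R1 ha hl)
  have ddP3 : ∀ l, c < l → HasDerivAt (fun l => (auxQ a l + l * auxQ1 a l) / a ^ 6)
      ((2 * auxQ1 a l + l * auxQ2 a l) / a ^ 6) l :=
    fun l hl => aux_lift1 (aux_Q ha (hQpos l hl).1 (hQpos l hl).2)
      (aux_Q1 ha (hQpos l hl).1 (hQpos l hl).2)
  have cP3 : ContinuousAt (P₃ a) c := by
    have : ContinuousAt (fun l => l / a ^ 6 * auxQ a l) c := by fun_prop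
    exact this
  have c1 : ContinuousAt (fun l => (auxQ a l + l * auxQ1 a l) / a ^ 6) c := by fun_prop
  have c2 : ContinuousAt (fun l => (2 * auxQ1 a l + l * auxQ2 a l) / a ^ 6) c := by fun_prop
  have G1 := aux_glue hac dP2 dP3 cP3 c1
    (show c / a ^ 6 * auxR a c = c / a ^ 6 * auxQ a c by rw [e0])
    (by simp only [e0, e1]) (F := fun l => if l ≤ c then P₂ a l else P₃ a l) (fun l _ => rfl)
  have G2 := aux_glue hac ddP2 ddP3 c1 c2 (by simp only [e0, e1]) (by simp only [e1, e2])
    (fun l hl => (G1 l hl).deriv)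
  refine ⟨(G2 c hac).differentiableAt, (2 * auxR1 a c + c * auxR2 a c) / a ^ 6, ?_, ?_⟩
  · have cR1 : ContinuousAt (auxR1 a) c := (aux_R1 ha hac).continuousAt
    have c3 : ContinuousAt (fun l => (2 * auxR1 a l + l * auxR2 a l) / a ^ 6) c := by fun_prop
    refine (c3.tendsto.mono_left nhdsWithin_le_nhds).congr' ?_
    filter_upwards [mem_nhdsWithin_of_mem_nhds (Ioi_mem_nhds hac)] with l hl
    refine ((ddP2 l hl).congr_of_eventuallyEq ?_).deriv.symm
    filter_upwards [Ioi_mem_nhds hl] with x hx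
    exact (dP2 x hx).deriv
  · rw [e1, e2]
    refine (c2.tendsto.mono_left nhdsWithin_le_nhds).congr' ?_
    filter_upwards [self_mem_nhdsWithin] with l hl
    refine ((ddP3 l hl).congr_of_eventuallyEq ?_).deriv.symm
    filter_upwards [Ioi_mem_nhds hl] with x hx
    exact (dP3 x hx).deriv
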